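/- A trigraph G contains a square-connected homogeneous pair of strong cliques if and only if it contains a deletion-minimal homogeneous pair of strong cliques (equivalently, G is laminar precisely if it contains no deletion-minimal homogeneous pair of strong cliques). -/

import Mathlib

/-- A trigraph on a vertex type `V`: a symmetric adjacency function with values in
`{1, 0, -1}`, zero on the diagonal, such that semiedges form a matching. -/
structure Trigraph (V : Type) where
  θ : V → V → ℤ
  range_mem : ∀ u v, θ u v = 1 ∨ θ u v = 0 ∨ θ u v = -1
  symm : ∀ u v, θ u v = θ v u
  refl_zero : ∀ v, θ v v = 0
  semi_matching : ∀ u v w : V, u ≠ v → u ≠ w → v ≠ w → θ u v = 0 → θ u w ≠ 0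

namespace Trigraph

variable {V V' V'' : Type}

/-- `u` and `v` are strongly adjacent. -/
def StrongAdj (G : Trigraph V) (u v : V) : Prop := G.θ u v = 1

/-- Distinct `u` and `v` are semiadjacent. -/
def SemiAdj (G : Trigraph V) (u v : V) : Prop := u ≠ v ∧ G.θ u v = 0

/-- Distinct `u` and `v` are adjacent. -/
def Adj (G : Trigraph V) (u v : V) : Prop := u ≠ v ∧ (G.θ u v = 1 ∨ G.θ u v = 0)

/-- Distinct `u` and `v` are antiadjacent. -/
def AntiAdj (G : Trigraph V) (u v : V) : Prop := u ≠ v ∧ (G.θ u v = 0 ∨ G.θ u v = -1)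

/-- `u` and `v` are strongly antiadjacent. -/
def StrongAntiAdj (G : Trigraph V) (u v : V) : Prop := G.θ u v = -1

/-- `X` is strongly complete to `Y`. -/
def StronglyComplete (G : Trigraph V) (X Y : Set V) : Prop :=
  ∀ u ∈ X, ∀ v ∈ Y, G.StrongAdj u v

/-- `X` is strongly anticomplete to `Y`. -/
def StronglyAnticomplete (G : Trigraph V) (X Y : Set V) : Prop :=
  ∀ u ∈ X, ∀ v ∈ Y, G.StrongAntiAdj u v

/-- A strong clique: pairwise strongly adjacent vertices. -/
def IsStrongClique (G : Trigraph V) (K : Set V) : Prop := K.Pairwise G.StrongAdj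

/-- A stable set: pairwise antiadjacent vertices. -/
def IsStableSet (G : Trigraph V) (S : Set V) : Prop := S.Pairwise G.AntiAdj

/-- The neighbourhood of a vertex: the set of vertices adjacent to it. -/
def neighborhood (G : Trigraph V) (v : V) : Set V := {u | G.Adj v u}

/-- Claw-free: no vertex has three pairwise antiadjacent vertices in its neighbourhood. -/
def ClawFree (G : Trigraph V) : Prop :=
  ¬ ∃ v a b c : V, G.Adj v a ∧ G.Adj v b ∧ G.Adj v c ∧
    G.AntiAdj a b ∧ G.AntiAdj a c ∧ G.AntiAdj b c

/-- Cobipartite: the vertex set is the union of two strong cliques. -/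
def Cobipartite (G : Trigraph V) : Prop :=
  ∃ K1 K2 : Set V, G.IsStrongClique K1 ∧ G.IsStrongClique K2 ∧ K1 ∪ K2 = Set.univ

/-- Quasi-line: the neighbourhood of every vertex is the union of two strong cliques. -/
def QuasiLine (G : Trigraph V) : Prop :=
  ∀ v : V, ∃ K1 K2 : Set V, G.IsStrongClique K1 ∧ G.IsStrongClique K2 ∧
    G.neighborhood v = K1 ∪ K2

/-- Connected: any two vertices are joined by a sequence of consecutively adjacent vertices. -/
def Connected (G : Trigraph V) : Prop :=
  ∀ u v : V, Relation.ReflTransGen G.Adj u v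

/-- Non-degenerate: quasi-line and not cobipartite, or claw-free with stability number ≥ 3. -/
def NonDegenerate (G : Trigraph V) : Prop :=
  (G.QuasiLine ∧ ¬ G.Cobipartite) ∨
  (G.ClawFree ∧ ∃ S : Set V, G.IsStableSet S ∧ 3 ≤ S.ncard)

/-- A homogeneous set: `|V| > |X| ≥ 2` and every vertex outside `X` is strongly complete
or strongly anticomplete to `X`. -/
def HomogeneousSet (G : Trigraph V) (X : Set V) : Prop :=
  2 ≤ X.ncard ∧ X ≠ Set.univ ∧
  ∀ v ∉ X, G.StronglyComplete {v} X ∨ G.StronglyAnticomplete {v} X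

/-- `v1 v2 v3 v4` is a square: the pairs `v1v3`, `v2v4` are antiadjacent and the other
four pairs are adjacent. -/
def IsSquare (G : Trigraph V) (v1 v2 v3 v4 : V) : Prop :=
  G.AntiAdj v1 v3 ∧ G.AntiAdj v2 v4 ∧
  G.Adj v1 v2 ∧ G.Adj v2 v3 ∧ G.Adj v3 v4 ∧ G.Adj v4 v1

/-- `X` contains a square. -/
def HasSquareIn (G : Trigraph V) (X : Set V) : Prop :=
  ∃ v1 v2 v3 v4 : V, G.IsSquare v1 v2 v3 v4 ∧ ({v1, v2, v3, v4} : Set V) ⊆ X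

/-- Homogeneous pair of strong cliques `(A, B)`. -/
def HPOSC (G : Trigraph V) (A B : Set V) : Prop :=
  A.Nonempty ∧ B.Nonempty ∧ Disjoint A B ∧
  G.IsStrongClique A ∧ G.IsStrongClique B ∧
  ¬ (∃ a b : V, A = {a} ∧ B = {b}) ∧
  ∀ v ∉ A ∪ B,
    (G.StronglyComplete {v} A ∨ G.StronglyAnticomplete {v} A) ∧
    (G.StronglyComplete {v} B ∨ G.StronglyAnticomplete {v} B)

/-- Deletion-minimal homogeneous pair of strong cliques. -/
def DeletionMinimal (G : Trigraph V) (A B : Set V) : Prop :=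
  G.HPOSC A B ∧ G.HasSquareIn (A ∪ B) ∧
  (∀ a ∈ A, ¬ G.StronglyComplete {a} B ∧ ¬ G.StronglyAnticomplete {a} B) ∧
  (∀ b ∈ B, ¬ G.StronglyComplete {b} A ∧ ¬ G.StronglyAnticomplete {b} A)

/-- There is a square contained in `X` intersecting both `S1` and `S2`. -/
def SquareMeets (G : Trigraph V) (X S1 S2 : Set V) : Prop :=
  ∃ v1 v2 v3 v4 : V, G.IsSquare v1 v2 v3 v4 ∧ ({v1, v2, v3, v4} : Set V) ⊆ X ∧
    (({v1, v2, v3, v4} : Set V) ∩ S1).Nonempty ∧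
    (({v1, v2, v3, v4} : Set V) ∩ S2).Nonempty

/-- Square-connected homogeneous pair of strong cliques. -/
def SquareConnected (G : Trigraph V) (A B : Set V) : Prop :=
  G.HPOSC A B ∧
  (∀ A' A'' : Set V, A'.Nonempty → A''.Nonempty → A' ∪ A'' = A → Disjoint A' A'' →
    G.SquareMeets (A ∪ B) A' A'') ∧
  (∀ B' B'' : Set V, B'.Nonempty → B''.Nonempty → B' ∪ B'' = B → Disjoint B' B'' →
    G.SquareMeets (A ∪ B) B' B'')

/-- Inclusion-maximal square-connected homogeneous pair of strong cliques. -/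
def MaxSquareConnected (G : Trigraph V) (A B : Set V) : Prop :=
  G.SquareConnected A B ∧
  ∀ A' B' : Set V, G.SquareConnected A' B' → A ⊆ A' → B ⊆ B' → A' = A ∧ B' = B

/-- Two homogeneous pairs have skew intersection if a part of one intersects both
parts of the other. -/
def SkewIntersection (A1 B1 A2 B2 : Set V) : Prop :=
  ((A1 ∩ A2).Nonempty ∧ (A1 ∩ B2).Nonempty) ∨
  ((B1 ∩ A2).Nonempty ∧ (B1 ∩ B2).Nonempty) ∨
  ((A2 ∩ A1).Nonempty ∧ (A2 ∩ B1).Nonempty) ∨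
  ((B2 ∩ A1).Nonempty ∧ (B2 ∩ B1).Nonempty)

/-- Laminar: contains no square-connected homogeneous pair of strong cliques. -/
def Laminar (G : Trigraph V) : Prop := ¬ ∃ A B : Set V, G.SquareConnected A B

/-- `G` is a thickening of `G'` via the map `I` (equivalently, `G'` is an antithickening
of `G`): the `I v` are nonempty strong cliques partitioning `V(G)` respecting adjacency. -/
def IsThickening (G : Trigraph V) (G' : Trigraph V') (I : V' → Set V) : Prop :=
  (∀ v : V', (I v).Nonempty ∧ G.IsStrongClique (I v)) ∧
  (∀ u v : V', u ≠ v → Disjoint (I u) (I v)) ∧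
  (⋃ v : V', I v) = Set.univ ∧
  ∀ u v : V', u ≠ v →
    (G'.StrongAdj u v → G.StronglyComplete (I u) (I v)) ∧
    (G'.StrongAntiAdj u v → G.StronglyAnticomplete (I u) (I v)) ∧
    (G'.SemiAdj u v →
      ¬ G.StronglyComplete (I u) (I v) ∧ ¬ G.StronglyAnticomplete (I u) (I v))

/-- `G'` (with thickening map `I`) is an optimal antithickening of `G`: it is a laminar
antithickening with the maximum possible number of vertices. -/
def OptimalAntithickening (G : Trigraph V) (G' : Trigraph V') (I : V' → Set V) : Prop :=
  G.IsThickening G' I ∧ G'.Laminar ∧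
  ∀ (W : Type) (H : Trigraph W) (J : W → Set V),
    G.IsThickening H J → H.Laminar → Nat.card W ≤ Nat.card V'

/-- Isomorphism of trigraphs. -/
def Isomorphic (G1 : Trigraph V) (G2 : Trigraph V') : Prop :=
  ∃ f : V ≃ V', ∀ u v : V, G2.θ (f u) (f v) = G1.θ u v

end Trigraph

/-!
Squares inside `A ∪ B` pair up vertices of `A`; call two vertices of `A` linked if some square
contains both, and likewise in `B`. In a square-connected pair the links connect each part, so every
vertex lies in a square and is therefore mixed on the other part.

Conversely, let `A₁` be the set of vertices of `A` reachable by links from a vertex of a square, and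
let `B₁` be the set of vertices of `B` that are mixed on `A₁`. Two unlinked vertices of `A` have
nested neighbourhoods in `B`, and the direction of the nesting is the same for all pairs between two
given components. Hence a vertex of `A` outside `A₁` is not mixed on `B₁`, so `(A₁, B₁)` is a
homogeneous pair. The same nesting in `B₁` shows that all squares at a common vertex of `A₁` meet
`B₁` in the same component, so `B₁` is connected by links as well.
-/

theorem exists_adj_boundary_of_reachable {α : Type*} {H : SimpleGraph α} {u v : α} {S : Set α}
    (h : H.Reachable u v) (hu : u ∈ S) (hv : v ∉ S) : ∃ x ∈ S, ∃ y ∉ S, H.Adj x y := by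
  obtain ⟨p⟩ := h
  obtain ⟨d, -, hd, hd'⟩ := p.exists_boundary_dart S hu hv
  exact ⟨d.fst, hd, d.snd, hd', d.adj⟩

theorem mem_of_reachable_of_forall_adj {α : Type*} {H : SimpleGraph α} {u v : α} {S : Set α}
    (h : H.Reachable u v) (hu : u ∈ S) (hS : ∀ x ∈ S, ∀ y, H.Adj x y → y ∈ S) : v ∈ S := by
  by_contra hv
  obtain ⟨x, hx, y, hy, hxy⟩ := exists_adj_boundary_of_reachable h hu hv
  exact hy (hS x hx y hxy)

namespace Trigraph

variable {V : Type} {G : Trigraph V} {A B S T : Set V} {a a' a'' b b' d d' u u' v v' w : V}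

theorem StrongAdj.symm (h : G.StrongAdj u v) : G.StrongAdj v u := (G.symm v u).trans h

theorem Adj.symm (h : G.Adj u v) : G.Adj v u := ⟨h.1.symm, G.symm u v ▸ h.2⟩

theorem AntiAdj.symm (h : G.AntiAdj u v) : G.AntiAdj v u := ⟨h.1.symm, G.symm u v ▸ h.2⟩

theorem SemiAdj.symm (h : G.SemiAdj u v) : G.SemiAdj v u := ⟨h.1.symm, G.symm u v ▸ h.2⟩

theorem adj_iff_not_strongAntiAdj : G.Adj u v ↔ u ≠ v ∧ ¬ G.StrongAntiAdj u v := by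
  have := G.range_mem u v
  unfold Adj StrongAntiAdj
  grind

theorem antiAdj_iff_not_strongAdj : G.AntiAdj u v ↔ u ≠ v ∧ ¬ G.StrongAdj u v := by
  have := G.range_mem u v
  unfold AntiAdj StrongAdj
  grind

theorem antiAdj_of_not_adj (huv : u ≠ v) (h : ¬ G.Adj u v) : G.AntiAdj u v := by
  have := G.range_mem u v
  unfold Adj at h
  unfold AntiAdj
  grind

theorem AntiAdj.not_strongAdj (h : G.AntiAdj u v) : ¬ G.StrongAdj u v :=
  (antiAdj_iff_not_strongAdj.1 h).2

theorem StrongAdj.adj (h : G.StrongAdj u v) : G.Adj u v := by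
  refine ⟨?_, Or.inl h⟩
  rintro rfl
  exact zero_ne_one ((G.refl_zero u).symm.trans h)

theorem Adj.semiAdj (h : G.Adj u v) (h' : G.AntiAdj u v) : G.SemiAdj u v :=
  ⟨h.1, h.2.resolve_left h'.not_strongAdj⟩

theorem SemiAdj.eq (hv : G.SemiAdj u v) (hw : G.SemiAdj u w) : v = w := by
  by_contra hvw
  exact G.semi_matching u v w hv.1 hw.1 hvw hv.2 hw.2

/-- `v` is mixed on `S` if it is neither strongly complete nor strongly anticomplete to `S`. -/
def IsMixedOn (G : Trigraph V) (v : V) (S : Set V) : Prop :=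
  ¬ G.StronglyComplete {v} S ∧ ¬ G.StronglyAnticomplete {v} S

theorem not_isMixedOn_iff :
    ¬ G.IsMixedOn v S ↔ G.StronglyComplete {v} S ∨ G.StronglyAnticomplete {v} S := by
  rw [IsMixedOn, ← not_or, not_not]

theorem isMixedOn_iff_exists (hv : v ∉ S) :
    G.IsMixedOn v S ↔ (∃ s ∈ S, G.AntiAdj v s) ∧ ∃ s ∈ S, G.Adj v s := by
  have hne : ∀ s ∈ S, v ≠ s := fun s hs => (ne_of_mem_of_not_mem hs hv).symm
  simp only [IsMixedOn, StronglyComplete, StronglyAnticomplete, Set.mem_singleton_iff,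
    forall_eq, not_forall, exists_prop, antiAdj_iff_not_strongAdj, adj_iff_not_strongAntiAdj]
  grind

theorem IsMixedOn.mono (hST : S ⊆ T) (h : G.IsMixedOn v S) : G.IsMixedOn v T :=
  ⟨fun hT => h.1 fun u hu s hs => hT u hu s (hST hs),
    fun hT => h.2 fun u hu s hs => hT u hu s (hST hs)⟩

theorem IsStrongClique.not_isMixedOn (hT : G.IsStrongClique T) (hST : S ⊆ T) (hvT : v ∈ T)
    (hvS : v ∉ S) : ¬ G.IsMixedOn v S := by
  refine fun h => h.1 ?_
  rintro _ rfl s hs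
  exact hT hvT (hST hs) (ne_of_mem_of_not_mem hs hvS).symm

/-- The form taken by a square `a a' b' b` inside the union of two disjoint strong cliques `A`
and `B`: it has the edge `aa'` in `A` and the edge `b'b` in `B`. That `b ≠ b'` is a consequence,
because a vertex lies in at most one semiadjacent pair; see `IsCrossSquare.ne_right`. -/
structure IsCrossSquare (G : Trigraph V) (A B : Set V) (a a' b b' : V) : Prop where
  mem_left : a ∈ A
  mem_left' : a' ∈ A
  mem_right : b ∈ B
  mem_right' : b' ∈ B
  ne_left : a ≠ a'
  adj : G.Adj a b
  adj' : G.Adj a' b'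
  antiAdj : G.AntiAdj a b'
  antiAdj' : G.AntiAdj a' b

namespace IsCrossSquare

theorem ne_right (h : G.IsCrossSquare A B a a' b b') : b ≠ b' := by
  rintro rfl
  exact h.ne_left
    ((h.adj.semiAdj h.antiAdj).symm.eq (h.adj'.semiAdj h.antiAdj').symm)

theorem swap (h : G.IsCrossSquare A B a a' b b') : G.IsCrossSquare A B a' a b' b :=
  ⟨h.mem_left', h.mem_left, h.mem_right', h.mem_right, h.ne_left.symm, h.adj', h.adj,
    h.antiAdj', h.antiAdj⟩

theorem transpose (h : G.IsCrossSquare A B a a' b b') : G.IsCrossSquare B A b b' a a' :=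
  ⟨h.mem_right, h.mem_right', h.mem_left, h.mem_left', h.ne_right, h.adj.symm, h.adj'.symm,
    h.antiAdj'.symm, h.antiAdj.symm⟩

theorem isMixedOn (h : G.IsCrossSquare A B a a' b b') : G.IsMixedOn a B :=
  ⟨fun hc => h.antiAdj.not_strongAdj (hc a rfl b' h.mem_right'),
    fun hc => (adj_iff_not_strongAntiAdj.1 h.adj).2 (hc a rfl b h.mem_right)⟩

theorem isSquare (hA : G.IsStrongClique A) (hB : G.IsStrongClique B)
    (h : G.IsCrossSquare A B a a' b b') : G.IsSquare a a' b' b :=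
  ⟨h.antiAdj, h.antiAdj', (hA h.mem_left h.mem_left' h.ne_left).adj, h.adj',
    (hB h.mem_right' h.mem_right h.ne_right.symm).adj, h.adj.symm⟩

theorem subset_union (h : G.IsCrossSquare A B a a' b b') : ({a, a', b', b} : Set V) ⊆ A ∪ B := by
  rintro x (rfl | rfl | rfl | rfl)
  exacts [Or.inl h.mem_left, Or.inl h.mem_left', Or.inr h.mem_right', Or.inr h.mem_right]

theorem hasSquareIn (hA : G.IsStrongClique A) (hB : G.IsStrongClique B)
    (h : G.IsCrossSquare A B a a' b b') : G.HasSquareIn (A ∪ B) :=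
  ⟨a, a', b', b, h.isSquare hA hB, h.subset_union⟩

end IsCrossSquare

theorem IsSquare.isCrossSquare {v₁ v₂ v₃ v₄ : V} (h : G.IsSquare v₁ v₂ v₃ v₄)
    (h₁ : v₁ ∈ A) (h₂ : v₂ ∈ A) (h₃ : v₃ ∈ B) (h₄ : v₄ ∈ B) :
    G.IsCrossSquare A B v₁ v₂ v₄ v₃ := by
  obtain ⟨h13, h24, h12, h23, -, h41⟩ := h
  exact ⟨h₁, h₂, h₄, h₃, h12.1, h41.symm, h23, h13, h24⟩

theorem IsSquare.rotate {v₁ v₂ v₃ v₄ : V} (h : G.IsSquare v₁ v₂ v₃ v₄) :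
    G.IsSquare v₂ v₃ v₄ v₁ := by
  obtain ⟨h13, h24, h12, h23, h34, h41⟩ := h
  exact ⟨h24, h13.symm, h23, h34, h41, h12⟩

theorem AntiAdj.mem_of_mem_union (hA : G.IsStrongClique A) (hB : G.IsStrongClique B)
    (h : G.AntiAdj u v) (hu : u ∈ A ∪ B) (hv : v ∈ A ∪ B) :
    u ∈ A ∧ v ∈ B ∨ u ∈ B ∧ v ∈ A := by
  rcases hu with hu | hu <;> rcases hv with hv | hv
  · exact absurd (hA hu hv h.1) h.not_strongAdj
  · exact Or.inl ⟨hu, hv⟩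
  · exact Or.inr ⟨hu, hv⟩
  · exact absurd (hB hu hv h.1) h.not_strongAdj

theorem IsSquare.exists_isCrossSquare (hA : G.IsStrongClique A) (hB : G.IsStrongClique B)
    {v₁ v₂ v₃ v₄ : V} (h : G.IsSquare v₁ v₂ v₃ v₄) (hsub : {v₁, v₂, v₃, v₄} ⊆ A ∪ B) :
    ∃ a a' b b', G.IsCrossSquare A B a a' b b' ∧ ({v₁, v₂, v₃, v₄} : Set V) = {a, a', b, b'} := by
  have h13 := h.1.mem_of_mem_union hA hB (hsub (by simp)) (hsub (by simp))
  have h24 := h.2.1.mem_of_mem_union hA hB (hsub (by simp)) (hsub (by simp))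
  rcases h13 with ⟨h₁, h₃⟩ | ⟨h₁, h₃⟩ <;> rcases h24 with ⟨h₂, h₄⟩ | ⟨h₂, h₄⟩
  · exact ⟨_, _, _, _, h.isCrossSquare h₁ h₂ h₃ h₄, by grind⟩
  · exact ⟨_, _, _, _, h.rotate.rotate.rotate.isCrossSquare h₄ h₁ h₂ h₃, by grind⟩
  · exact ⟨_, _, _, _, h.rotate.isCrossSquare h₂ h₃ h₄ h₁, by grind⟩
  · exact ⟨_, _, _, _, h.rotate.rotate.isCrossSquare h₃ h₄ h₁ h₂, by grind⟩

/-- The link graph of `A` relative to `B`: two vertices of `A` are joined if they lie in a common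
square with its other two vertices in `B`. Vertices outside `A` are isolated. -/
def squareGraph (G : Trigraph V) (A B : Set V) : SimpleGraph V where
  Adj a a' := ∃ b b', G.IsCrossSquare A B a a' b b'
  symm := ⟨fun _ _ ⟨b, b', h⟩ => ⟨b', b, h.swap⟩⟩
  loopless := ⟨fun _ ⟨_, _, h⟩ => h.ne_left rfl⟩

theorem IsCrossSquare.squareGraph_adj (h : G.IsCrossSquare A B a a' b b') :
    (G.squareGraph A B).Adj a a' := ⟨b, b', h⟩

theorem mem_of_squareGraph_adj (h : (G.squareGraph A B).Adj a a') : a' ∈ A := by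
  obtain ⟨_, _, hsq⟩ := h
  exact hsq.mem_left'

theorem mem_of_squareGraph_reachable (h : (G.squareGraph A B).Reachable a a') (ha : a ∈ A) :
    a' ∈ A :=
  mem_of_reachable_of_forall_adj h ha fun _ _ _ => mem_of_squareGraph_adj

/-- `A` is square-linked relative to `B` if the squares with two vertices in `A` and two in `B`
connect `A`: the half of square-connectedness that concerns `A`. -/
def IsSquareLinked (G : Trigraph V) (A B : Set V) : Prop :=
  ∀ a ∈ A, ∀ a' ∈ A, (G.squareGraph A B).Reachable a a'

theorem squareMeets_iff_exists_squareGraph_adj (hAB : Disjoint A B) (hA : G.IsStrongClique A)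
    (hB : G.IsStrongClique B) (hS : S ⊆ A) (hT : T ⊆ A) (hST : Disjoint S T) :
    G.SquareMeets (A ∪ B) S T ↔ ∃ x ∈ S, ∃ y ∈ T, (G.squareGraph A B).Adj x y := by
  constructor
  · rintro ⟨v₁, v₂, v₃, v₄, hsq, hsub, ⟨x, hx, hxS⟩, ⟨y, hy, hyT⟩⟩
    obtain ⟨a, a', b, b', h, heq⟩ := hsq.exists_isCrossSquare hA hB hsub
    have eq_or_eq : ∀ z ∈ A, z ∈ ({v₁, v₂, v₃, v₄} : Set V) → z = a ∨ z = a' := by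
      intro z hzA hz
      rw [heq] at hz
      rcases hz with hz | hz | rfl | rfl
      exacts [Or.inl hz, Or.inr hz, (hAB.ne_of_mem hzA h.mem_right rfl).elim,
        (hAB.ne_of_mem hzA h.mem_right' rfl).elim]
    have hxy : x ≠ y := hST.ne_of_mem hxS hyT
    refine ⟨x, hxS, y, hyT, ?_⟩
    rcases eq_or_eq x (hS hxS) hx with rfl | rfl <;> rcases eq_or_eq y (hT hyT) hy with rfl | rfl
    exacts [absurd rfl hxy, h.squareGraph_adj, h.squareGraph_adj.symm, absurd rfl hxy]
  · rintro ⟨x, hx, y, hy, b, b', h⟩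
    exact ⟨x, y, b', b, h.isSquare hA hB, h.subset_union, ⟨x, by simp, hx⟩, ⟨y, by simp, hy⟩⟩

theorem isSquareLinked_iff_forall_squareMeets (hAB : Disjoint A B) (hA : G.IsStrongClique A)
    (hB : G.IsStrongClique B) :
    G.IsSquareLinked A B ↔ ∀ A' A'' : Set V, A'.Nonempty → A''.Nonempty → A' ∪ A'' = A →
      Disjoint A' A'' → G.SquareMeets (A ∪ B) A' A'' := by
  constructor
  · rintro hlink A' A'' ⟨x, hx⟩ ⟨y, hy⟩ rfl hdisj
    rw [squareMeets_iff_exists_squareGraph_adj hAB hA hB Set.subset_union_left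
      Set.subset_union_right hdisj]
    obtain ⟨s, hs, t, ht, hst⟩ := exists_adj_boundary_of_reachable
      (hlink x (Or.inl hx) y (Or.inr hy)) hx (hdisj.notMem_of_mem_right hy)
    exact ⟨s, hs, t, (mem_of_squareGraph_adj hst).resolve_left ht, hst⟩
  · intro hmeets x hx y hy
    by_contra hxy
    let S := {z | (G.squareGraph A B).Reachable x z}
    have hSA : S ⊆ A := fun z hz => mem_of_squareGraph_reachable hz hx
    have hcut := hmeets S (A \ S) ⟨x, .rfl⟩ ⟨y, hy, hxy⟩ (Set.union_sdiff_cancel hSA)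
      Set.disjoint_sdiff_right
    rw [squareMeets_iff_exists_squareGraph_adj hAB hA hB hSA Set.sdiff_subset
      Set.disjoint_sdiff_right] at hcut
    obtain ⟨s, hs, t, ht, hst⟩ := hcut
    exact ht.2 (hs.trans hst.reachable)

theorem squareConnected_iff_isSquareLinked :
    G.SquareConnected A B ↔ G.HPOSC A B ∧ G.IsSquareLinked A B ∧ G.IsSquareLinked B A := by
  refine and_congr_right fun h => ?_
  obtain ⟨-, -, hAB, hA, hB, -⟩ := h
  rw [isSquareLinked_iff_forall_squareMeets hAB hA hB,
    isSquareLinked_iff_forall_squareMeets hAB.symm hB hA, Set.union_comm B A]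

theorem IsSquareLinked.exists_squareGraph_adj (h : G.IsSquareLinked A B) (hA : A.Nontrivial)
    (ha : a ∈ A) : ∃ a', (G.squareGraph A B).Adj a a' := by
  obtain ⟨a', ha', hne⟩ := hA.exists_ne a
  exact (h a ha a' ha').nonempty_neighborSet_left hne.symm

theorem IsSquareLinked.isMixedOn (h : G.IsSquareLinked A B) (hA : A.Nontrivial) (ha : a ∈ A) :
    G.IsMixedOn a B := by
  obtain ⟨_, _, _, hsq⟩ := h.exists_squareGraph_adj hA ha
  exact hsq.isMixedOn

theorem HPOSC.nontrivial_or_nontrivial (h : G.HPOSC A B) : A.Nontrivial ∨ B.Nontrivial := by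
  obtain ⟨⟨a, ha⟩, ⟨b, hb⟩, -, -, -, hnot, -⟩ := h
  by_contra! hsub
  exact hnot ⟨a, b, hsub.1.eq_singleton_of_mem ha, hsub.2.eq_singleton_of_mem hb⟩

theorem SquareConnected.exists_isCrossSquare (h : G.SquareConnected A B) :
    ∃ a a' b b', G.IsCrossSquare A B a a' b b' := by
  obtain ⟨hpair, hlinkA, hlinkB⟩ := squareConnected_iff_isSquareLinked.1 h
  rcases hpair.nontrivial_or_nontrivial with hnt | hnt
  · obtain ⟨a, ha⟩ := hnt.nonempty
    exact ⟨a, hlinkA.exists_squareGraph_adj hnt ha⟩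
  · obtain ⟨b, hb⟩ := hnt.nonempty
    obtain ⟨b', a, a', hsq⟩ := hlinkB.exists_squareGraph_adj hnt hb
    exact ⟨a, a', b, b', hsq.transpose⟩

theorem SquareConnected.deletionMinimal (h : G.SquareConnected A B) : G.DeletionMinimal A B := by
  obtain ⟨a, a', b, b', hsq⟩ := h.exists_isCrossSquare
  obtain ⟨hpair, hlinkA, hlinkB⟩ := squareConnected_iff_isSquareLinked.1 h
  have hntA : A.Nontrivial := ⟨a, hsq.mem_left, a', hsq.mem_left', hsq.ne_left⟩
  have hntB : B.Nontrivial := ⟨b, hsq.mem_right, b', hsq.mem_right', hsq.ne_right⟩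
  obtain ⟨-, -, -, hA, hB, -⟩ := id hpair
  exact ⟨hpair, hsq.hasSquareIn hA hB, fun _ hx => hlinkA.isMixedOn hntA hx,
    fun _ hx => hlinkB.isMixedOn hntB hx⟩

/-- `u` strongly dominates `v` on `S` if every neighbour of `v` in `S` is a strong neighbour of
`u`. This is the nesting of neighbourhoods that holds between vertices in no common square. -/
def StronglyDominates (G : Trigraph V) (S : Set V) (u v : V) : Prop :=
  ∀ w ∈ S, G.Adj v w → G.StrongAdj u w

theorem StronglyDominates.trans (huv : G.StronglyDominates S u v)
    (hvw : G.StronglyDominates S v w) : G.StronglyDominates S u w :=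
  fun x hx hwx => huv x hx (hvw x hx hwx).adj

theorem not_stronglyDominates_of_squareGraph_adj (h : (G.squareGraph A B).Adj a a') :
    ¬ G.StronglyDominates B a a' := by
  obtain ⟨b, b', hsq⟩ := h
  exact fun hdom => hsq.antiAdj.not_strongAdj (hdom b' hsq.mem_right' hsq.adj')

theorem stronglyDominates_or_stronglyDominates (hAB : Disjoint A B) (ha : a ∈ A) (ha' : a' ∈ A)
    (h : ¬ (G.squareGraph A B).Reachable a a') :
    G.StronglyDominates B a a' ∨ G.StronglyDominates B a' a := by
  by_contra! hcon
  simp only [StronglyDominates, not_forall, exists_prop] at hcon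
  obtain ⟨⟨b', hb', hadj', hnot⟩, ⟨b, hb, hadj, hnot'⟩⟩ := hcon
  have hne : a ≠ a' := fun e => h (e ▸ .rfl)
  have hsq : G.IsCrossSquare A B a a' b b' := ⟨ha, ha', hb, hb', hne, hadj, hadj',
    antiAdj_iff_not_strongAdj.2 ⟨hAB.ne_of_mem ha hb', hnot⟩,
    antiAdj_iff_not_strongAdj.2 ⟨hAB.ne_of_mem ha' hb, hnot'⟩⟩
  exact h hsq.squareGraph_adj.reachable

theorem StronglyDominates.of_reachable_left (hAB : Disjoint A B)
    (h : G.StronglyDominates B u v) (hv : v ∈ A) (huv : ¬ (G.squareGraph A B).Reachable u v)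
    (huu' : (G.squareGraph A B).Reachable u u') : G.StronglyDominates B u' v := by
  suffices hu' : u' ∈ {x | (G.squareGraph A B).Reachable u x ∧ G.StronglyDominates B x v} from
    hu'.2
  refine mem_of_reachable_of_forall_adj huu' ⟨.rfl, h⟩ ?_
  rintro x ⟨hux, hxv⟩ y hxy
  have huy := hux.trans hxy.reachable
  have hy : y ∈ A := mem_of_squareGraph_adj hxy
  refine ⟨huy, (stronglyDominates_or_stronglyDominates hAB hy hv
    fun hyv => huv (huy.trans hyv)).resolve_right fun hvy => ?_⟩
  exact not_stronglyDominates_of_squareGraph_adj hxy (hxv.trans hvy)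

theorem StronglyDominates.of_reachable_right (hAB : Disjoint A B)
    (h : G.StronglyDominates B u v) (hu : u ∈ A) (huv : ¬ (G.squareGraph A B).Reachable u v)
    (hvv' : (G.squareGraph A B).Reachable v v') : G.StronglyDominates B u v' := by
  suffices hv' : v' ∈ {x | (G.squareGraph A B).Reachable v x ∧ G.StronglyDominates B u x} from
    hv'.2
  refine mem_of_reachable_of_forall_adj hvv' ⟨.rfl, h⟩ ?_
  rintro x ⟨hvx, hux⟩ y hxy
  have hvy := hvx.trans hxy.reachable
  have hy : y ∈ A := mem_of_squareGraph_adj hxy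
  refine ⟨hvy, (stronglyDominates_or_stronglyDominates hAB hu hy
    fun huy => huv (huy.trans hvy.symm)).resolve_right fun hyu => ?_⟩
  exact not_stronglyDominates_of_squareGraph_adj hxy.symm (hyu.trans hux)

theorem squareGraph_reachable_of_isCrossSquare (hAB : Disjoint A B)
    (h : G.IsCrossSquare A B a a' b b') (h' : G.IsCrossSquare A B a a'' d d') :
    (G.squareGraph B A).Reachable b d := by
  by_contra hbd
  have hbb' := h.transpose.squareGraph_adj.reachable
  have hdd' := h'.transpose.squareGraph_adj.reachable
  rcases stronglyDominates_or_stronglyDominates hAB.symm h.mem_right h'.mem_right hbd with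
    hdom | hdom
  · have hb'd := hdom.of_reachable_left hAB.symm h'.mem_right hbd hbb'
    exact h.antiAdj.not_strongAdj (hb'd a h.mem_left h'.adj.symm).symm
  · have hd'b := hdom.of_reachable_left hAB.symm h.mem_right (fun hdb => hbd hdb.symm) hdd'
    exact h'.antiAdj.not_strongAdj (hd'b a h.mem_left h.adj.symm).symm

theorem squareGraph_reachable_of_reachable (hAB : Disjoint A B)
    (haa : (G.squareGraph A B).Reachable a u) (h : G.IsCrossSquare A B a a' b b')
    (h' : G.IsCrossSquare A B u u' d d') : (G.squareGraph B A).Reachable b d := by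
  suffices hu : u ∈ {x | ∀ y c c', G.IsCrossSquare A B x y c c' →
      (G.squareGraph B A).Reachable b c} from hu u' d d' h'
  refine mem_of_reachable_of_forall_adj haa
    (fun _ _ _ => squareGraph_reachable_of_isCrossSquare hAB h) ?_
  rintro x hx y ⟨c, c', hxy⟩ z e e' hyz
  exact (hx y c c' hxy).trans <| hxy.transpose.squareGraph_adj.reachable.trans <|
    squareGraph_reachable_of_isCrossSquare hAB hxy.swap hyz

theorem IsSquareLinked.exists_squareGraph_adj_of_isMixedOn (h : G.IsSquareLinked A B)
    (hA : A.Nontrivial) (hb : b ∉ A) (hmixed : G.IsMixedOn b A) :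
    ∃ x y, (G.squareGraph A B).Adj x y ∧ G.Adj b x ∧ G.AntiAdj b y := by
  obtain ⟨⟨s, hs, hbs⟩, ⟨t, ht, hbt⟩⟩ := (isMixedOn_iff_exists hb).1 hmixed
  by_cases hbs' : G.Adj b s
  · obtain ⟨y, hsy⟩ := h.exists_squareGraph_adj hA hs
    have hy : y ∈ A := mem_of_squareGraph_adj hsy
    by_cases hby : G.Adj b y
    · exact ⟨y, s, hsy.symm, hby, hbs⟩
    · exact ⟨s, y, hsy, hbs', antiAdj_of_not_adj (ne_of_mem_of_not_mem hy hb).symm hby⟩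
  · obtain ⟨x, hbx, y, hby, hxy⟩ :=
      exists_adj_boundary_of_reachable (S := {x | G.Adj b x}) (h t ht s hs) hbt hbs'
    have hy : y ∈ A := mem_of_squareGraph_adj hxy
    exact ⟨x, y, hxy, hbx, antiAdj_of_not_adj (ne_of_mem_of_not_mem hy hb).symm hby⟩

theorem IsSquareLinked.exists_isCrossSquare_of_isMixedOn (h : G.IsSquareLinked A B)
    (hA : A.Nontrivial) (hbA : b ∉ A) (hb : b ∈ B) (hmixed : G.IsMixedOn b A) :
    ∃ a a' b', G.IsCrossSquare A B a a' b b' := by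
  obtain ⟨a, a', ⟨c, c', hsq⟩, hba, hba'⟩ :=
    h.exists_squareGraph_adj_of_isMixedOn hA hbA hmixed
  exact ⟨a, a', c', { hsq with mem_right := hb, adj := hba.symm, antiAdj' := hba'.symm }⟩

theorem IsSquareLinked.symm_of_forall_isMixedOn (h : G.IsSquareLinked A B) (hAB : Disjoint A B)
    (hA : A.Nontrivial) (hmixed : ∀ b ∈ B, G.IsMixedOn b A) : G.IsSquareLinked B A := by
  intro b hb d hd
  obtain ⟨x, x', b', hx⟩ := h.exists_isCrossSquare_of_isMixedOn hA
    (hAB.notMem_of_mem_right hb) hb (hmixed b hb)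
  obtain ⟨y, y', d', hy⟩ := h.exists_isCrossSquare_of_isMixedOn hA
    (hAB.notMem_of_mem_right hd) hd (hmixed d hd)
  exact squareGraph_reachable_of_reachable hAB (h x hx.mem_left y hy.mem_left) hx hy

/-- The component of `a` in the link graph of `A` relative to `B`. -/
def squareComponent (G : Trigraph V) (A B : Set V) (a : V) : Set V :=
  {x | (G.squareGraph A B).Reachable a x}

/-- The vertices of `B` that are mixed on `S`. -/
def mixedVertices (G : Trigraph V) (B S : Set V) : Set V :=
  {b ∈ B | G.IsMixedOn b S}

theorem mixedVertices_subset : G.mixedVertices B S ⊆ B := Set.sep_subset _ _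

theorem squareComponent_subset (ha : a ∈ A) : G.squareComponent A B a ⊆ A :=
  fun _ hx => mem_of_squareGraph_reachable hx ha

theorem IsCrossSquare.restrict (h : G.IsCrossSquare A B u u' b b')
    (hu : u ∈ G.squareComponent A B a) :
    G.IsCrossSquare (G.squareComponent A B a)
      (G.mixedVertices B (G.squareComponent A B a)) u u' b b' := by
  have hu' : u' ∈ G.squareComponent A B a := hu.trans h.squareGraph_adj.reachable
  have hsq : G.IsCrossSquare (G.squareComponent A B a) B u u' b b' :=
    { h with mem_left := hu, mem_left' := hu' }
  exact { hsq with
    mem_right := ⟨h.mem_right, hsq.transpose.isMixedOn⟩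
    mem_right' := ⟨h.mem_right', hsq.swap.transpose.isMixedOn⟩ }

theorem isSquareLinked_squareComponent :
    G.IsSquareLinked (G.squareComponent A B a)
      (G.mixedVertices B (G.squareComponent A B a)) := by
  set A₁ := G.squareComponent A B a
  have from_root : ∀ x ∈ A₁, (G.squareGraph A₁ (G.mixedVertices B A₁)).Reachable a x := by
    intro x hx
    suffices hmem : x ∈ {y | y ∈ A₁ ∧ (G.squareGraph A₁ (G.mixedVertices B A₁)).Reachable a y} from
      hmem.2
    refine mem_of_reachable_of_forall_adj hx ⟨.rfl, .rfl⟩ ?_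
    rintro y ⟨hy, hay⟩ z ⟨b, b', hsq⟩
    have hsq₁ := hsq.restrict hy
    exact ⟨hsq₁.mem_left', hay.trans hsq₁.squareGraph_adj.reachable⟩
  exact fun x hx y hy => (from_root x hx).symm.trans (from_root y hy)

theorem not_isMixedOn_mixedVertices_squareComponent (hAB : Disjoint A B) (ha : a ∈ A)
    (hv : v ∈ A) (hva : v ∉ G.squareComponent A B a) :
    ¬ G.IsMixedOn v (G.mixedVertices B (G.squareComponent A B a)) := by
  have hexists : ∀ b ∈ G.mixedVertices B (G.squareComponent A B a),
      (∃ x ∈ G.squareComponent A B a, G.AntiAdj b x) ∧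
        ∃ x ∈ G.squareComponent A B a, G.Adj b x := fun b hb =>
    (isMixedOn_iff_exists fun hbA =>
      hAB.ne_of_mem (squareComponent_subset ha hbA) hb.1 rfl).1 hb.2
  rw [isMixedOn_iff_exists fun hvB => hAB.ne_of_mem hv hvB.1 rfl]
  rintro ⟨⟨b, hb, hvb⟩, ⟨b', hb', hvb'⟩⟩
  rcases stronglyDominates_or_stronglyDominates hAB ha hv hva with hdom | hdom
  · obtain ⟨x, hax, hb'x⟩ := (hexists b' hb').1
    have hxv := hdom.of_reachable_left hAB hv hva hax
    exact hb'x.not_strongAdj (hxv b' hb'.1 hvb').symm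
  · obtain ⟨x, hax, hbx⟩ := (hexists b hb).2
    have hvx := hdom.of_reachable_right hAB hv (fun h => hva h.symm) hax
    exact hvb.not_strongAdj (hvx b hb.1 hbx.symm)

theorem HPOSC.restrict_squareComponent (h : G.HPOSC A B) (hsq : G.IsCrossSquare A B a a' b b') :
    G.HPOSC (G.squareComponent A B a) (G.mixedVertices B (G.squareComponent A B a)) := by
  obtain ⟨-, -, hAB, hA, hB, -, hout⟩ := h
  have hA₁ : G.squareComponent A B a ⊆ A := squareComponent_subset hsq.mem_left
  have hB₁ : G.mixedVertices B (G.squareComponent A B a) ⊆ B := mixedVertices_subset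
  have hsq₁ := hsq.restrict (a := a) .rfl
  refine ⟨⟨a, hsq₁.mem_left⟩, ⟨b, hsq₁.mem_right⟩, hAB.mono hA₁ hB₁, hA.mono hA₁, hB.mono hB₁,
    ?_, fun v hv => ?_⟩
  · rintro ⟨x, y, hx, -⟩
    have hax : a ∈ ({x} : Set V) := hx ▸ hsq₁.mem_left
    have ha'x : a' ∈ ({x} : Set V) := hx ▸ hsq₁.mem_left'
    exact hsq.ne_left (hax.trans ha'x.symm)
  rw [← not_isMixedOn_iff, ← not_isMixedOn_iff]
  have hvA₁ := fun h => hv (Or.inl h)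
  have hvB₁ := fun h => hv (Or.inr h)
  by_cases hvA : v ∈ A
  · exact ⟨hA.not_isMixedOn hA₁ hvA hvA₁,
      not_isMixedOn_mixedVertices_squareComponent hAB hsq.mem_left hvA hvA₁⟩
  by_cases hvB : v ∈ B
  · exact ⟨fun hmixed => hvB₁ ⟨hvB, hmixed⟩, hB.not_isMixedOn hB₁ hvB hvB₁⟩
  · have hvout := hout v fun hvAB => hvAB.elim hvA hvB
    rw [← not_isMixedOn_iff, ← not_isMixedOn_iff] at hvout
    exact ⟨fun hmixed => hvout.1 (hmixed.mono hA₁), fun hmixed => hvout.2 (hmixed.mono hB₁)⟩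

theorem HPOSC.squareConnected_squareComponent (h : G.HPOSC A B)
    (hsq : G.IsCrossSquare A B a a' b b') :
    G.SquareConnected (G.squareComponent A B a)
      (G.mixedVertices B (G.squareComponent A B a)) := by
  have hpair := h.restrict_squareComponent hsq
  have hlink := isSquareLinked_squareComponent (G := G) (A := A) (B := B) (a := a)
  have hsq₁ := hsq.restrict (a := a) .rfl
  refine squareConnected_iff_isSquareLinked.2 ⟨hpair, hlink, ?_⟩
  exact hlink.symm_of_forall_isMixedOn hpair.2.2.1
    ⟨a, hsq₁.mem_left, a', hsq₁.mem_left', hsq₁.ne_left⟩ fun _ hx => hx.2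

theorem HPOSC.exists_squareConnected (h : G.HPOSC A B) (hsq : G.HasSquareIn (A ∪ B)) :
    ∃ A₁ ⊆ A, ∃ B₁ ⊆ B, G.SquareConnected A₁ B₁ := by
  obtain ⟨-, -, -, hA, hB, -⟩ := id h
  obtain ⟨v₁, v₂, v₃, v₄, hv, hsub⟩ := hsq
  obtain ⟨a, a', b, b', hcross, -⟩ := hv.exists_isCrossSquare hA hB hsub
  exact ⟨_, squareComponent_subset hcross.mem_left, _, mixedVertices_subset,
    h.squareConnected_squareComponent hcross⟩

end Trigraph

theorem squareConnected_iff_deletionMinimal_general {V : Type} (G : Trigraph V) :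
    (∃ A B : Set V, G.SquareConnected A B) ↔
      (∃ A B : Set V, G.DeletionMinimal A B) := by
  constructor
  · rintro ⟨A, B, h⟩
    exact ⟨A, B, h.deletionMinimal⟩
  · rintro ⟨A, B, hpair, hsq, -⟩
    obtain ⟨A₁, -, B₁, -, h⟩ := hpair.exists_squareConnected hsq
    exact ⟨A₁, B₁, h⟩

/-- A trigraph contains a square-connected homogeneous pair of strong
cliques if and only if it contains a deletion-minimal homogeneous pair of strong
cliques. -/
theorem squareConnected_iff_deletionMinimal {V : Type} [Fintype V] (G : Trigraph V) :
    (∃ A B : Set V, G.SquareConnected A B) ↔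
      (∃ A B : Set V, G.DeletionMinimal A B) :=
  squareConnected_iff_deletionMinimal_general G
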